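/- Fix N ≥ 1, channel gains h : Fin N → ℝ with h i ≥ 0, noise power σ² > 0, w ≥ 0, β ∈ ℝ, and p^c ≥ 0. Define f : (Fin N → ℝ) × ℝ → ℝ by f(s, τ) = w · τ · ln(1 + (Σ_i h i · s i)/(σ² · τ)) − β · (Σ_i s i + τ · p^c) for τ > 0, and f(s, 0) = −β · Σ_i s i. Then for every θ ∈ (0, 1), every τ̇ > 0, and every ṡ, s̈ : Fin N → ℝ with ṡ i ≥ 0 and s̈ i ≥ 0 for all i, one has f(θ·ṡ + (1−θ)·s̈, θ·τ̇) ≥ θ · f(ṡ, τ̇) + (1−θ) · f(s̈, 0). -/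

import Mathlib

/-!
The extended objective is positively homogeneous in `(s, τ)`, so the inequality reduces to
`f(s, τ) + f(t, 0) ≤ f(s + t, τ)` with `s = θ ṡ`, `t = (1 - θ) s̈` and `τ = θ τ̇`. Here the terms in
`β` are additive and cancel, while adding `t` can only increase the argument of the logarithm.
-/

open Set

/-- The throughput `τ log (1 + a / (σ² τ))`, without the weight `w`, of a transmission of duration
`τ` with received energy `a`, that is, with signal-to-noise ratio `a / (σ² τ)`. -/
noncomputable def throughput (σ2 a τ : ℝ) : ℝ :=
  τ * Real.log (1 + a / (σ2 * τ))

theorem throughput_zero_right (σ2 a : ℝ) : throughput σ2 a 0 = 0 :=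
  zero_mul _

theorem throughput_mul_mul (σ2 a τ c : ℝ) :
    throughput σ2 (c * a) (c * τ) = c * throughput σ2 a τ := by
  rcases eq_or_ne c 0 with rfl | hc
  · simp only [zero_mul, throughput_zero_right]
  · simp only [throughput, mul_left_comm σ2 c τ, mul_div_mul_left _ _ hc, mul_assoc]

theorem monotoneOn_throughput {σ2 τ : ℝ} (hσ : 0 < σ2) (hτ : 0 ≤ τ) :
    MonotoneOn (fun a ↦ throughput σ2 a τ) (Ici 0) := by
  intro a (ha : 0 ≤ a) b _ hab
  dsimp only [throughput]
  gcongr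

section UserObjective

variable {ι : Type*} [Fintype ι]

/-- The per-user objective `f` with channel gains `h`, extended to `τ = 0` by `-β ∑ i, s i`. The
extension takes this value at negative `τ` too, which has no meaning in the paper. -/
noncomputable def userObjective (h : ι → ℝ) (σ2 w β pc : ℝ) (s : ι → ℝ) (τ : ℝ) : ℝ :=
  if 0 < τ then
    w * τ * Real.log (1 + (h ⬝ᵥ s) / (σ2 * τ)) - β * ((∑ i, s i) + τ * pc)
  else -(β * ∑ i, s i)

variable {h : ι → ℝ} {σ2 w β pc : ℝ}

theorem userObjective_of_nonneg (s : ι → ℝ) {τ : ℝ} (hτ : 0 ≤ τ) :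
    userObjective h σ2 w β pc s τ =
      w * throughput σ2 (h ⬝ᵥ s) τ - β * ((∑ i, s i) + τ * pc) := by
  rcases hτ.eq_or_lt with rfl | hτ
  · simp [userObjective, throughput_zero_right]
  · simp only [userObjective, throughput, if_pos hτ, mul_assoc]

theorem userObjective_smul_mul (s : ι → ℝ) {c τ : ℝ} (hc : 0 ≤ c) (hτ : 0 ≤ τ) :
    userObjective h σ2 w β pc (c • s) (c * τ) = c * userObjective h σ2 w β pc s τ := by
  have hsum : ∑ i, (c • s) i = c * ∑ i, s i := (Finset.mul_sum _ _ _).symm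
  rw [userObjective_of_nonneg _ (mul_nonneg hc hτ),
    userObjective_of_nonneg s hτ, dotProduct_smul, smul_eq_mul, throughput_mul_mul, hsum]
  ring

theorem userObjective_add_userObjective_zero_le (hσ : 0 < σ2) (hw : 0 ≤ w)
    {s t : ι → ℝ} (hs : 0 ≤ h ⬝ᵥ s) (ht : 0 ≤ h ⬝ᵥ t) {τ : ℝ} (hτ : 0 ≤ τ) :
    userObjective h σ2 w β pc s τ + userObjective h σ2 w β pc t 0 ≤
      userObjective h σ2 w β pc (s + t) τ := by
  have hthroughput : throughput σ2 (h ⬝ᵥ s) τ ≤ throughput σ2 (h ⬝ᵥ (s + t)) τ := by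
    rw [dotProduct_add]
    exact monotoneOn_throughput hσ hτ hs (add_nonneg hs ht) (le_add_of_nonneg_right ht)
  have hsum : ∑ i, (s + t) i = ∑ i, s i + ∑ i, t i := Finset.sum_add_distrib
  rw [userObjective_of_nonneg s hτ, userObjective_of_nonneg t le_rfl,
    userObjective_of_nonneg (s + t) hτ, throughput_zero_right, hsum]
  linarith [mul_le_mul_of_nonneg_left hthroughput hw]

theorem concavity_boundary_case_general (hσ : 0 < σ2) (hw : 0 ≤ w)
    {θ τ : ℝ} (hθ : θ ∈ Icc (0 : ℝ) 1) (hτ : 0 ≤ τ)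
    {s t : ι → ℝ} (hs : 0 ≤ h ⬝ᵥ s) (ht : 0 ≤ h ⬝ᵥ t) :
    θ * userObjective h σ2 w β pc s τ + (1 - θ) * userObjective h σ2 w β pc t 0 ≤
      userObjective h σ2 w β pc (θ • s + (1 - θ) • t) (θ * τ) := by
  have hθ' : 0 ≤ 1 - θ := sub_nonneg.2 hθ.2
  have hs' : 0 ≤ h ⬝ᵥ (θ • s) := by
    rw [dotProduct_smul]
    exact smul_nonneg hθ.1 hs
  have ht' : 0 ≤ h ⬝ᵥ ((1 - θ) • t) := by
    rw [dotProduct_smul]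
    exact smul_nonneg hθ' ht
  calc
    θ * userObjective h σ2 w β pc s τ + (1 - θ) * userObjective h σ2 w β pc t 0
    _ = userObjective h σ2 w β pc (θ • s) (θ * τ) +
          userObjective h σ2 w β pc ((1 - θ) • t) 0 := by
      rw [← userObjective_smul_mul s hθ.1 hτ,
        ← userObjective_smul_mul t hθ' le_rfl, mul_zero]
    _ ≤ userObjective h σ2 w β pc (θ • s + (1 - θ) • t) (θ * τ) :=
      userObjective_add_userObjective_zero_le hσ hw hs' ht' (mul_nonneg hθ.1 hτ)

end UserObjective

/-- Case 2 of Appendix B of the paper: the concavity inequality for the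
extended per-user objective `f` along segments joining an interior point
`(ṡ, τ̇)` with `τ̇ > 0` to a boundary point `(s̈, 0)`. -/
theorem concavity_boundary_case
    (N : ℕ) (hN : 1 ≤ N) (h : Fin N → ℝ) (hh : ∀ i, 0 ≤ h i)
    (σ2 : ℝ) (hσ : 0 < σ2) (w : ℝ) (hw : 0 ≤ w) (β : ℝ) (pc : ℝ) (hpc : 0 ≤ pc)
    (f : (Fin N → ℝ) → ℝ → ℝ)
    (hf : ∀ s τ, f s τ =
      if 0 < τ then
        w * τ * Real.log (1 + (∑ i, h i * s i) / (σ2 * τ)) -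
          β * ((∑ i, s i) + τ * pc)
      else -(β * ∑ i, s i))
    (θ : ℝ) (hθ : θ ∈ Set.Ioo (0 : ℝ) 1)
    (τdot : ℝ) (hτdot : 0 < τdot)
    (sdot sddot : Fin N → ℝ) (hsdot : ∀ i, 0 ≤ sdot i) (hsddot : ∀ i, 0 ≤ sddot i) :
    θ * f sdot τdot + (1 - θ) * f sddot 0 ≤
      f (fun i => θ * sdot i + (1 - θ) * sddot i) (θ * τdot) := by
  obtain rfl : f = userObjective h σ2 w β pc := funext₂ hf
  exact concavity_boundary_case_general hσ hw (Ioo_subset_Icc_self hθ) hτdot.le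
    (dotProduct_nonneg_of_nonneg hh hsdot) (dotProduct_nonneg_of_nonneg hh hsddot)
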